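/- Let W be a real n × n matrix, let p ≥ 1, let 0 < c < 1, and let K = {Ψ ∈ ℝ^{p×p} : ‖Ψᵀ ⊗ W‖₁ ≤ c}. Then the map Ψ ↦ (1/(np)) log det(I_{np} − Ψᵀ ⊗ W) is Lipschitz continuous on K: there exists a constant L (depending only on c and ‖W‖₁, not on n) such that for all Ψ, Ψ' ∈ K, |(1/(np)) log det(I − Ψᵀ ⊗ W) − (1/(np)) log det(I − Ψ'ᵀ ⊗ W)| ≤ L · max_{i,j} |ψ_{ij} − ψ'_{ij}|. -/

import Mathlib

open Matrix Kronecker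

/-- Maximum absolute column sum norm of a square real matrix. -/
noncomputable def colNorm {ι : Type*} [Fintype ι] (A : Matrix ι ι ℝ) : ℝ :=
  ⨆ j, ∑ i, |A i j|

section ColumnSums

variable {ι : Type*} [Fintype ι]

theorem sum_abs_le_colNorm (A : Matrix ι ι ℝ) (j : ι) : ∑ i, |A i j| ≤ colNorm A :=
  le_ciSup (f := fun j => ∑ i, |A i j|) (Set.finite_range _).bddAbove j

theorem colNorm_nonneg (A : Matrix ι ι ℝ) : 0 ≤ colNorm A :=
  Real.iSup_nonneg fun _ => Finset.sum_nonneg fun _ _ => abs_nonneg _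

theorem abs_apply_le_colNorm (A : Matrix ι ι ℝ) (i j : ι) : |A i j| ≤ colNorm A :=
  (Finset.single_le_sum (f := fun i => |A i j|) (fun _ _ => abs_nonneg _)
    (Finset.mem_univ i)).trans (sum_abs_le_colNorm A j)

/-- The `ℓ¹` operator norm of a matrix is at most any bound on its absolute column sums. -/
theorem sum_abs_mulVec_le {A : Matrix ι ι ℝ} {c : ℝ} (hA : ∀ j, ∑ i, |A i j| ≤ c) (v : ι → ℝ) :
    ∑ i, |(A *ᵥ v) i| ≤ c * ∑ k, |v k| := by
  calc ∑ i, |(A *ᵥ v) i| ≤ ∑ i, ∑ k, |A i k| * |v k| := by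
        refine Finset.sum_le_sum fun i _ => ?_
        simp only [mulVec, dotProduct, ← abs_mul]
        exact Finset.abs_sum_le_sum_abs _ _
    _ = ∑ k, (∑ i, |A i k|) * |v k| := by
        rw [Finset.sum_comm]
        simp only [Finset.sum_mul]
    _ ≤ ∑ k, c * |v k| := Finset.sum_le_sum fun k _ =>
        mul_le_mul_of_nonneg_right (hA k) (abs_nonneg _)
    _ = c * ∑ k, |v k| := (Finset.mul_sum _ _ _).symm

theorem abs_trace_mul_le {M D : Matrix ι ι ℝ} {m d : ℝ} (hd : 0 ≤ d)
    (hM : ∀ j, ∑ i, |M i j| ≤ m) (hD : ∀ i j, |D i j| ≤ d) :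
    |(M * D).trace| ≤ Fintype.card ι * (m * d) := by
  calc |(M * D).trace| ≤ ∑ i, ∑ k, |M i k| * |D k i| := by
        simp only [trace, diag, mul_apply, ← abs_mul]
        exact (Finset.abs_sum_le_sum_abs _ _).trans
          (Finset.sum_le_sum fun i _ => Finset.abs_sum_le_sum_abs _ _)
    _ ≤ ∑ i, ∑ k, |M i k| * d := by gcongr; exact hD _ _
    _ = ∑ k, (∑ i, |M i k|) * d := by
        rw [Finset.sum_comm]
        simp only [Finset.sum_mul]
    _ ≤ ∑ _k : ι, m * d := by gcongr; exact hM _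
    _ = Fintype.card ι * (m * d) := by simp

variable [DecidableEq ι]

theorem det_one_sub_ne_zero_of_sum_abs_le {A : Matrix ι ι ℝ} {c : ℝ} (hc : c < 1)
    (hA : ∀ j, ∑ i, |A i j| ≤ c) : (1 - A).det ≠ 0 := by
  intro h
  obtain ⟨v, hv, hv0⟩ := Matrix.exists_mulVec_eq_zero_iff.mpr h
  rw [sub_mulVec, one_mulVec, sub_eq_zero] at hv0
  have hle := sum_abs_mulVec_le hA v
  rw [← hv0] at hle
  have hnn : 0 ≤ ∑ k, |v k| := Finset.sum_nonneg fun _ _ => abs_nonneg _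
  have hzero : ∑ k, |v k| = 0 := by nlinarith
  refine hv (funext fun k => abs_eq_zero.mp ?_)
  exact (Finset.sum_eq_zero_iff_of_nonneg fun _ _ => abs_nonneg _).mp hzero k (Finset.mem_univ k)

theorem sum_abs_inv_one_sub_le {A : Matrix ι ι ℝ} {c : ℝ} (hc : c < 1)
    (hA : ∀ j, ∑ i, |A i j| ≤ c) (j : ι) : ∑ i, |(1 - A)⁻¹ i j| ≤ 1 / (1 - c) := by
  set M := (1 - A)⁻¹
  have hM : (1 - A) * M = 1 :=
    mul_nonsing_inv _ (det_one_sub_ne_zero_of_sum_abs_le hc hA).isUnit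
  have hM' : M = 1 + A * M := by rw [← hM]; noncomm_ring
  have hle := sum_abs_mulVec_le hA (fun k => M k j)
  have hone : ∑ i, |(1 : Matrix ι ι ℝ) i j| = 1 := by
    simp [Matrix.one_apply, apply_ite abs]
  have hsum : ∑ i, |M i j| ≤ 1 + c * ∑ i, |M i j| := by
    calc ∑ i, |M i j| = ∑ i, |(1 : Matrix ι ι ℝ) i j + (A *ᵥ fun k => M k j) i| := by
          refine Finset.sum_congr rfl fun i _ => congrArg abs ?_
          exact congrFun (congrFun hM' i) j
      _ ≤ ∑ i, (|(1 : Matrix ι ι ℝ) i j| + |(A *ᵥ fun k => M k j) i|) :=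
          Finset.sum_le_sum fun _ _ => abs_add_le _ _
      _ ≤ 1 + c * ∑ i, |M i j| := by
          rw [Finset.sum_add_distrib, hone]
          linarith
  rw [le_div_iff₀ (by linarith)]
  linarith

/-- Jacobi's formula along an affine line of matrices. -/
theorem hasDerivAt_det_add_smul (S D : Matrix ι ι ℝ) (t : ℝ) (h : (S + t • D).det ≠ 0) :
    HasDerivAt (fun s : ℝ => (S + s • D).det)
      ((S + t • D).det * ((S + t • D)⁻¹ * D).trace) t := by
  set T := S + t • D with hT
  set X := T⁻¹ * D
  have hTX : T * X = D := mul_nonsing_inv_cancel_left _ _ h.isUnit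
  have hfun : (fun s : ℝ => (S + s • D).det) = fun s => T.det *
      (1 + X.trace * (s - t) + (Polynomial.eval (s - t)
        (det (1 + (Polynomial.X : Polynomial ℝ) • X.map Polynomial.C)).divX.divX) *
          (s - t) ^ 2) := by
    funext s
    rw [← det_one_add_smul, ← det_mul, mul_add, mul_one, mul_smul_comm, hTX, hT, sub_smul]
    congr 1
    abel
  rw [hfun]
  refine HasDerivAt.const_mul _ ?_
  set q := (det (1 + (Polynomial.X : Polynomial ℝ) • X.map Polynomial.C)).divX.divX
  have hs : HasDerivAt (fun s : ℝ => s - t) 1 t := (hasDerivAt_id t).sub_const t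
  have hq : HasDerivAt (fun s : ℝ => q.eval (s - t)) (q.derivative.eval (t - t) * 1) t :=
    HasDerivAt.comp (h := fun s : ℝ => s - t) t (q.hasDerivAt (t - t)) hs
  refine (((hs.const_mul X.trace).const_add 1).add (hq.mul (hs.pow 2))).congr_deriv ?_
  simp

/-- The log-determinant of `1 - A` is Lipschitz in the entrywise maximum norm on the set of
matrices with absolute column sums at most `c < 1`. -/
theorem abs_log_det_one_sub_sub_le {A B : Matrix ι ι ℝ} {c d : ℝ} (hc : c < 1) (hd : 0 ≤ d)
    (hA : ∀ j, ∑ i, |A i j| ≤ c) (hB : ∀ j, ∑ i, |B i j| ≤ c) (hAB : ∀ i j, |A i j - B i j| ≤ d) :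
    |Real.log (1 - A).det - Real.log (1 - B).det| ≤ Fintype.card ι * (1 / (1 - c) * d) := by
  have hline (t : ℝ) : 1 - B + t • (B - A) = 1 - ((1 - t) • B + t • A) := by
    module
  have hseg : ∀ t ∈ Set.Icc (0 : ℝ) 1, ∀ j, ∑ i, |((1 - t) • B + t • A) i j| ≤ c := by
    rintro t ⟨ht0, ht1⟩ j
    calc ∑ i, |((1 - t) • B + t • A) i j| ≤ ∑ i, ((1 - t) * |B i j| + t * |A i j|) := by
          refine Finset.sum_le_sum fun i _ => (abs_add_le _ _).trans_eq ?_
          simp [abs_mul, abs_of_nonneg ht0, abs_of_nonneg (sub_nonneg.mpr ht1)]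
      _ = (1 - t) * ∑ i, |B i j| + t * ∑ i, |A i j| := by
          rw [Finset.sum_add_distrib, Finset.mul_sum, Finset.mul_sum]
      _ ≤ (1 - t) * c + t * c := by
          gcongr
          · exact hB j
          · exact hA j
      _ = c := by ring
  have hdet : ∀ t ∈ Set.Icc (0 : ℝ) 1, (1 - B + t • (B - A)).det ≠ 0 := fun t ht => by
    rw [hline]
    exact det_one_sub_ne_zero_of_sum_abs_le hc (hseg t ht)
  have hderiv : ∀ t ∈ Set.Icc (0 : ℝ) 1,
      HasDerivWithinAt (fun s : ℝ => Real.log (1 - B + s • (B - A)).det)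
        (((1 - B + t • (B - A))⁻¹ * (B - A)).trace) (Set.Icc 0 1) t := fun t ht => by
    have := (hasDerivAt_det_add_smul (1 - B) (B - A) t (hdet t ht)).log (hdet t ht)
    rw [mul_div_cancel_left₀ _ (hdet t ht)] at this
    exact this.hasDerivWithinAt
  have hbound : ∀ t ∈ Set.Ico (0 : ℝ) 1,
      ‖((1 - B + t • (B - A))⁻¹ * (B - A)).trace‖ ≤ Fintype.card ι * (1 / (1 - c) * d) :=
    fun t ht => by
      rw [hline]
      refine abs_trace_mul_le hd
        (sum_abs_inv_one_sub_le hc (hseg t (Set.Ico_subset_Icc_self ht))) fun i j => ?_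
      rw [Matrix.sub_apply, abs_sub_comm]
      exact hAB i j
  simpa using norm_image_sub_le_of_norm_deriv_le_segment_01' hderiv hbound

end ColumnSums

/-- For `0 < c < 1`, the map `Ψ ↦ (1/(np)) log det(I_{np} − Ψᵀ ⊗ W)`
is Lipschitz on `K = {Ψ : ‖Ψᵀ ⊗ W‖₁ ≤ c}` with respect to the entrywise maximum
norm, with a Lipschitz constant `L` depending only on `c` and `‖W‖₁` (in
particular, not on `n`). -/
theorem stmt19 (c : ℝ) (hc0 : 0 < c) (hc1 : c < 1) :
    ∃ L : ℝ → ℝ, ∀ (n p : ℕ), 1 ≤ p →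
      ∀ (W : Matrix (Fin n) (Fin n) ℝ) (Ψ Ψ' : Matrix (Fin p) (Fin p) ℝ),
        colNorm (Ψᵀ ⊗ₖ W) ≤ c → colNorm (Ψ'ᵀ ⊗ₖ W) ≤ c →
        |(1 / ((n : ℝ) * p)) * Real.log (1 - Ψᵀ ⊗ₖ W).det -
            (1 / ((n : ℝ) * p)) * Real.log (1 - Ψ'ᵀ ⊗ₖ W).det| ≤
          L (colNorm W) * ⨆ i, ⨆ j, |Ψ i j - Ψ' i j| := by
  refine ⟨fun w => w / (1 - c), fun n p hp W Ψ Ψ' hΨ hΨ' => ?_⟩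
  set δ := ⨆ i, ⨆ j, |Ψ i j - Ψ' i j|
  have hδ (i j : Fin p) : |Ψ i j - Ψ' i j| ≤ δ :=
    (le_ciSup (f := fun j => |Ψ i j - Ψ' i j|) (Set.finite_range _).bddAbove j).trans
      (le_ciSup (f := fun i => ⨆ j, |Ψ i j - Ψ' i j|) (Set.finite_range _).bddAbove i)
  have hδ0 : 0 ≤ δ := Real.iSup_nonneg fun _ => Real.iSup_nonneg fun _ => abs_nonneg _
  have hW := colNorm_nonneg W
  have hc : 0 < 1 - c := sub_pos.mpr hc1
  have hentry (a b : Fin p × Fin n) :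
      |(Ψᵀ ⊗ₖ W) a b - (Ψ'ᵀ ⊗ₖ W) a b| ≤ δ * colNorm W := by
    simp only [kroneckerMap_apply, transpose_apply, ← sub_mul, abs_mul]
    exact mul_le_mul (hδ _ _) (abs_apply_le_colNorm W _ _) (abs_nonneg _) hδ0
  have key := abs_log_det_one_sub_sub_le hc1 (mul_nonneg hδ0 hW)
    (fun j => (sum_abs_le_colNorm _ j).trans hΨ) (fun j => (sum_abs_le_colNorm _ j).trans hΨ')
    hentry
  rw [← mul_sub, abs_mul, abs_of_nonneg (by positivity)]
  rcases Nat.eq_zero_or_pos n with rfl | hn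
  · simp only [Nat.cast_zero, zero_mul, div_zero]
    positivity
  have hnp : (0 : ℝ) < n * p := by positivity
  rw [one_div_mul_eq_div, div_le_iff₀ hnp]
  refine key.trans_eq ?_
  simp only [Fintype.card_prod, Fintype.card_fin, Nat.cast_mul]
  ring
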